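/- Let L ≥ 18 be an integer such that L = 2^{2t+1} + 2 for some integer t ≥ 1, or L = 2^{2t} − 2^{t+1} + 2 for some integer t ≥ 2, or L = 2^{2t} + 2^{t+1} + 2 for some integer t ≥ 1. Then M_S(L,3) = (L − 2)/8. -/

import Mathlib

open Finset

/-- The set of differences of a codeword `I ⊆ ℤ_L`. -/
def dset {L : ℕ} (I : Finset (ZMod L)) : Finset (ZMod L) :=
  (I ×ˢ I).image fun p => p.1 - p.2

/-- The set of nonzero differences. -/
def dstar {L : ℕ} (I : Finset (ZMod L)) : Finset (ZMod L) := dset I \ {0}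

/-- The set of shifted nonzero differences `d⁺(I) = d*(I) ∪ (d*(I)+1)`. -/
def dplus {L : ℕ} (I : Finset (ZMod L)) : Finset (ZMod L) :=
  dstar I ∪ (dstar I).image (· + 1)

/-- A strongly conflict-avoiding code of length `L` and weight `ω`. -/
def IsSCAC (L ω : ℕ) (C : Finset (Finset (ZMod L))) : Prop :=
  (∀ I ∈ C, I.card = ω) ∧
  (∀ I ∈ C, (1 : ZMod L) ∉ dstar I ∧ (-1 : ZMod L) ∉ dstar I) ∧
  ∀ I ∈ C, ∀ J ∈ C, I ≠ J → Disjoint (dplus I) (dplus J)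

/-- `M_S(L,ω)`: the maximum size of an SCAC of length `L` and weight `ω`. -/
noncomputable def MS (L ω : ℕ) : ℕ :=
  sSup {n | ∃ C : Finset (Finset (ZMod L)), IsSCAC L ω C ∧ C.card = n}

/-!
Upper bound: `d⁺(I)` is stable under `x ↦ 1 - x`, so it is determined by its members in `[1, L/2]`.
Cutting the cycle `ℤ_L` at the three points of `I` gives gaps `p ≤ q ≤ r` of sum `L`, and when
`L ≡ 2 mod 4` they produce four such members, hence `|d⁺(I)| ≥ 8`, unless the gaps are so balanced
that `⌊L/3⌋ ∈ d⁺(I)`, which happens for at most one codeword. All the sets `d⁺(I)` avoid `0` and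
`1`.

Lower bound: write `L = 2n` and use codewords `{-2a, 0, 2a}` with `a ∈ ℤ_n`. Their differences are
even, so the shifts by one never interfere, and what is needed is a set `B = -B` such that `B` and
`2B` partition `ℤ_n ∖ {0}`. If `n` is odd and `4 ^ s = -1` in `ℤ_n`, then every cycle of doubling on
`ℤ_n ∖ {0}` has even length, and alternate elements of each cycle form such a set. For the special
lengths, `n` divides some `4 ^ s + 1`, by the factorization of `4 x ^ 4 + 1` in two of the three
cases.
-/

/-! ### Differences -/

section Differences

variable {L : ℕ} {I : Finset (ZMod L)} {x : ZMod L}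

theorem mem_dstar : x ∈ dstar I ↔ (∃ a ∈ I, ∃ b ∈ I, a - b = x) ∧ x ≠ 0 := by
  simp [dstar, dset, and_assoc]

theorem mem_dplus : x ∈ dplus I ↔ x ∈ dstar I ∨ x - 1 ∈ dstar I := by
  simp [dplus, sub_eq_add_neg]

theorem sub_mem_dstar {a b : ZMod L} (ha : a ∈ I) (hb : b ∈ I) (hab : a ≠ b) :
    a - b ∈ dstar I :=
  mem_dstar.2 ⟨⟨a, ha, b, hb, rfl⟩, sub_ne_zero.2 hab⟩

theorem zero_notMem_dstar : (0 : ZMod L) ∉ dstar I := fun h => (mem_dstar.1 h).2 rfl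

theorem neg_mem_dstar (hx : x ∈ dstar I) : -x ∈ dstar I := by
  obtain ⟨⟨a, ha, b, hb, rfl⟩, hab⟩ := mem_dstar.1 hx
  exact mem_dstar.2 ⟨⟨b, hb, a, ha, (neg_sub a b).symm⟩, neg_ne_zero.2 hab⟩

theorem mem_dplus_of_mem_dstar (hx : x ∈ dstar I) : x ∈ dplus I :=
  mem_dplus.2 (Or.inl hx)

theorem add_one_mem_dplus (hx : x ∈ dstar I) : x + 1 ∈ dplus I :=
  mem_dplus.2 (Or.inr (by rwa [add_sub_cancel_right]))

theorem one_sub_mem_dplus (hx : x ∈ dplus I) : 1 - x ∈ dplus I := by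
  rcases mem_dplus.1 hx with h | h
  · simpa [sub_eq_neg_add] using add_one_mem_dplus (neg_mem_dstar h)
  · simpa using mem_dplus_of_mem_dstar (neg_mem_dstar h)

theorem two_le_of_natCast_mem_dstar (h1 : (1 : ZMod L) ∉ dstar I) {k : ℕ}
    (hk : (k : ZMod L) ∈ dstar I) : 2 ≤ k := by
  by_contra! hlt
  interval_cases k
  · exact zero_notMem_dstar (by simpa using hk)
  · exact h1 (by simpa using hk)

end Differences

/-! ### The upper bound -/

section UpperBound

variable {L : ℕ}

theorem two_mul_card_le_card_of_one_sub_mem {S : Finset (ZMod L)} (hS : ∀ x ∈ S, 1 - x ∈ S)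
    {K : Finset ℕ} (hK : ∀ k ∈ K, 1 ≤ k ∧ 2 * k ≤ L ∧ (k : ZMod L) ∈ S) :
    2 * K.card ≤ S.card := by
  have hdisj : Disjoint K (K.image (L + 1 - ·)) := by
    simp only [disjoint_left, mem_image, not_exists, not_and]
    intro k hk l hl hkl
    have := hK k hk
    have := hK l hl
    omega
  have hinj : Set.InjOn (L + 1 - ·) (K : Set ℕ) := fun k hk l hl (hkl : L + 1 - k = L + 1 - l) => by
    have := hK k hk
    have := hK l hl
    omega
  rw [two_mul]
  nth_rewrite 2 [← card_image_of_injOn hinj]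
  rw [← card_union_of_disjoint hdisj]
  refine card_le_card_of_injOn (Nat.cast : ℕ → ZMod L) ?_ ?_
  · intro k hk
    rcases mem_union.1 hk with hk | hk
    · exact (hK k hk).2.2
    · obtain ⟨l, hl, rfl⟩ := mem_image.1 hk
      obtain ⟨_, hlL, hlS⟩ := hK l hl
      simpa [Nat.cast_sub (show l ≤ L + 1 by omega)] using hS _ hlS
  · have hrange : ∀ k ∈ K ∪ K.image (L + 1 - ·), 1 ≤ k ∧ k ≤ L := by
      intro k hk
      rcases mem_union.1 hk with hk | hk
      · have := hK k hk
        omega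
      · obtain ⟨l, hl, rfl⟩ := mem_image.1 hk
        have := hK l hl
        omega
    intro k hk l hl hkl
    have := hrange k hk
    have := hrange l hl
    refine ((ZMod.natCast_eq_natCast_iff k l L).1 hkl).eq_of_abs_lt ?_
    rw [abs_lt]
    omega

theorem exists_gaps_of_card_eq_three [NeZero L] {I : Finset (ZMod L)} (hI : I.card = 3) :
    ∃ p q r : ℕ, p + q + r = L ∧
      (p : ZMod L) ∈ dstar I ∧ (q : ZMod L) ∈ dstar I ∧ (r : ZMod L) ∈ dstar I := by
  obtain ⟨x, y, z, hxy, hxz, hyz, rfl⟩ := card_eq_three.1 hI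
  have ha : x - y ∈ dstar {x, y, z} := sub_mem_dstar (by simp) (by simp) hxy
  have hb : y - z ∈ dstar {x, y, z} := sub_mem_dstar (by simp) (by simp) hyz
  have hc : z - x ∈ dstar {x, y, z} := sub_mem_dstar (by simp) (by simp) hxz.symm
  have hdvd : L ∣ (x - y).val + (y - z).val + (z - x).val := by
    rw [← ZMod.natCast_eq_zero_iff]
    simp
  have hneg {w : ZMod L} (hw : w ∈ dstar {x, y, z}) : 0 < w.val ∧ (-w).val = L - w.val := by
    have hw0 := (mem_dstar.1 hw).2
    exact ⟨ZMod.val_pos.2 hw0, by rw [ZMod.neg_val, if_neg hw0]⟩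
  have hlt := ZMod.val_lt (x - y)
  have hlt' := ZMod.val_lt (y - z)
  have hlt'' := ZMod.val_lt (z - x)
  obtain ⟨j, hj⟩ := hdvd
  have hj_pos : 0 < j := Nat.pos_of_ne_zero (by rintro rfl; have := hneg ha; omega)
  have hj_lt : j < 3 := by by_contra! h; nlinarith
  interval_cases j
  · exact ⟨(x - y).val, (y - z).val, (z - x).val, by omega, by simpa using ha,
      by simpa using hb, by simpa using hc⟩
  -- The three points occur in the opposite cyclic order, so the gaps are the negated differences.
  · refine ⟨(-(x - y)).val, (-(y - z)).val, (-(z - x)).val, ?_, ?_⟩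
    · rw [(hneg ha).2, (hneg hb).2, (hneg hc).2]
      omega
    · simp only [ZMod.natCast_zmod_val]
      exact ⟨neg_mem_dstar ha, neg_mem_dstar hb, neg_mem_dstar hc⟩

theorem exists_sorted_gaps_of_card_eq_three [NeZero L] {I : Finset (ZMod L)} (hI : I.card = 3) :
    ∃ p q r : ℕ, p + q + r = L ∧ p ≤ q ∧ q ≤ r ∧
      (p : ZMod L) ∈ dstar I ∧ (q : ZMod L) ∈ dstar I ∧ (r : ZMod L) ∈ dstar I := by
  obtain ⟨p, q, r, hsum, hp, hq, hr⟩ := exists_gaps_of_card_eq_three hI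
  wlog hpq : p ≤ q generalizing p q
  · exact this q p (by omega) hq hp (by omega)
  wlog hpr : p ≤ r generalizing p r
  · exact this p hp r (by omega) hr (by omega) (by omega)
  wlog hqr : q ≤ r generalizing q r
  · exact this r hr q hq (by omega) (by omega) (by omega) (by omega)
  exact ⟨p, q, r, hsum, hpq, hqr, hp, hq, hr⟩

theorem eight_le_card_dplus_of_four_mem {I : Finset (ZMod L)} {i j k l : ℕ} (hi : 1 ≤ i)
    (hij : i < j) (hjk : j < k) (hkl : k < l) (hl : 2 * l ≤ L) (mi : (i : ZMod L) ∈ dplus I)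
    (mj : (j : ZMod L) ∈ dplus I) (mk : (k : ZMod L) ∈ dplus I) (ml : (l : ZMod L) ∈ dplus I) :
    8 ≤ (dplus I).card := by
  have hcard : ({i, j, k, l} : Finset ℕ).card = 4 :=
    card_eq_four.2 ⟨i, j, k, l, by omega, by omega, by omega, by omega, by omega, by omega, rfl⟩
  have hmem : ∀ a ∈ ({i, j, k, l} : Finset ℕ), 1 ≤ a ∧ 2 * a ≤ L ∧ (a : ZMod L) ∈ dplus I := by
    simp only [mem_insert, mem_singleton]
    rintro a (rfl | rfl | rfl | rfl)
    exacts [⟨by omega, by omega, mi⟩, ⟨by omega, by omega, mj⟩, ⟨by omega, by omega, mk⟩,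
      ⟨by omega, by omega, ml⟩]
  have := two_mul_card_le_card_of_one_sub_mem (fun _ => one_sub_mem_dplus) hmem
  omega

theorem third_mem_dplus_or_eight_le_card_dplus (hL : L % 4 = 2) {I : Finset (ZMod L)}
    (hI : I.card = 3) (h1 : (1 : ZMod L) ∉ dstar I) :
    ((L / 3 : ℕ) : ZMod L) ∈ dplus I ∨ 8 ≤ (dplus I).card := by
  have : NeZero L := ⟨by omega⟩
  obtain ⟨p, q, r, hsum, hpq, hqr, hp, hq, hr⟩ := exists_sorted_gaps_of_card_eq_three hI
  have hp2 := two_le_of_natCast_mem_dstar h1 hp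
  have hmem {k : ℕ} (hk : (k : ZMod L) ∈ dstar I) : (k : ZMod L) ∈ dplus I :=
    mem_dplus_of_mem_dstar hk
  have hmem_succ {k : ℕ} (hk : (k : ZMod L) ∈ dstar I) : ((k + 1 : ℕ) : ZMod L) ∈ dplus I := by
    simpa using add_one_mem_dplus hk
  rcases lt_trichotomy (2 * r) L with hlt | heq | hgt
  · by_cases hbalanced : r ≤ p + 1
    · left
      rw [show L / 3 = p by omega]
      exact hmem hp
    · right
      exact eight_le_card_dplus_of_four_mem (by omega) (by omega) (by omega) (by omega) (by omega)
        (hmem hp) (hmem_succ hp) (hmem hr) (hmem_succ hr)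
  · right
    exact eight_le_card_dplus_of_four_mem (by omega) (by omega) (by omega) (by omega) (by omega)
      (hmem hp) (hmem_succ hp) (hmem_succ hq) (hmem hr)
  · right
    have hpq_mem : ((p + q : ℕ) : ZMod L) ∈ dstar I := by
      have hneg : ((p + q : ℕ) : ZMod L) = -r := by
        rw [eq_neg_iff_add_eq_zero, ← Nat.cast_add, hsum, ZMod.natCast_self]
      exact hneg ▸ neg_mem_dstar hr
    exact eight_le_card_dplus_of_four_mem (by omega) (by omega) (by omega) (by omega) (by omega)
      (hmem hp) (hmem_succ hp) (hmem hpq_mem) (hmem_succ hpq_mem)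

variable {C : Finset (Finset (ZMod L))}

theorem IsSCAC.sum_card_dplus_add_two_le {ω : ℕ} (hL : 1 < L) (hC : IsSCAC L ω C) :
    ∑ I ∈ C, (dplus I).card + 2 ≤ L := by
  have : NeZero L := ⟨by omega⟩
  have : Fact (1 < L) := ⟨hL⟩
  obtain ⟨-, hone, hdisj⟩ := hC
  have havoid : Disjoint (C.biUnion dplus) {0, 1} := by
    simp only [disjoint_insert_right, disjoint_singleton_right, mem_biUnion, not_exists, not_and,
      mem_dplus, not_or, zero_sub, sub_self]
    exact ⟨fun I hI => ⟨zero_notMem_dstar, (hone I hI).2⟩,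
      fun I hI => ⟨(hone I hI).1, zero_notMem_dstar⟩⟩
  calc ∑ I ∈ C, (dplus I).card + 2
      = (C.biUnion dplus ∪ {0, 1}).card := by
        rw [card_union_of_disjoint havoid, card_biUnion fun I hI J hJ => hdisj I hI J hJ,
          card_pair zero_ne_one]
    _ ≤ Fintype.card (ZMod L) := card_le_univ _
    _ = L := ZMod.card L

theorem IsSCAC.card_filter_mem_dplus_le_one {ω : ℕ} (hC : IsSCAC L ω C) (x : ZMod L) :
    (C.filter (x ∈ dplus ·)).card ≤ 1 := by
  simp only [card_le_one, mem_filter]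
  rintro I ⟨hI, hxI⟩ J ⟨hJ, hxJ⟩
  by_contra hIJ
  exact disjoint_left.1 (hC.2.2 I hI J hJ hIJ) hxI hxJ

theorem IsSCAC.eight_mul_card_le (hL : L % 4 = 2) (hC : IsSCAC L 3 C) : 8 * C.card ≤ L + 5 := by
  set third : ZMod L := ((L / 3 : ℕ) : ZMod L)
  have hweight : ∀ I ∈ C, 8 ≤ (dplus I).card + if third ∈ dplus I then 7 else 0 := by
    intro I hI
    split_ifs with hmem
    · have := card_pos.2 ⟨_, hmem⟩
      omega
    · exact (third_mem_dplus_or_eight_le_card_dplus hL (hC.1 I hI) (hC.2.1 I hI).1).resolve_left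
        hmem
  have hsum := hC.sum_card_dplus_add_two_le (by omega)
  have hexceptional := hC.card_filter_mem_dplus_le_one third
  have htotal := card_nsmul_le_sum C _ 8 hweight
  rw [sum_add_distrib, ← sum_filter, sum_const, smul_eq_mul, smul_eq_mul] at htotal
  omega

end UpperBound

/-! ### Splitting by doubling -/

section DoublingSplit

theorem exists_set_apply_mem_iff_notMem {α : Type*} (σ : Equiv.Perm α) :
    ∃ A : Set α, ∀ x, (∀ i : ℤ, (σ ^ i) x = x → Even i) → (σ x ∈ A ↔ x ∉ A) := by
  let cycles := Equiv.Perm.SameCycle.setoid σ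
  let rep (x : α) : α := (Quotient.mk cycles x).out
  have hrep (x : α) : σ.SameCycle (rep x) x := Quotient.mk_out (s := cycles) x
  have hrep_apply (x : α) : rep (σ x) = rep x :=
    congrArg Quotient.out (Quotient.sound (s := cycles)
      (Equiv.Perm.sameCycle_apply_left.2 (Equiv.Perm.SameCycle.refl σ x)))
  refine ⟨{x | ∃ i : ℤ, Even i ∧ (σ ^ i) (rep x) = x}, fun x hx => ⟨?_, fun hxA => ?_⟩⟩
  · rintro ⟨i, hi, hix⟩ ⟨j, hj, hjx⟩
    rw [hrep_apply] at hix
    have hperiod : (σ ^ (i - j - 1)) x = x :=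
      calc (σ ^ (i - j - 1)) x = (σ ^ (i - j - 1)) ((σ ^ j) (rep x)) := by rw [hjx]
        _ = σ⁻¹ ((σ ^ i) (rep x)) := by
          rw [← Equiv.Perm.mul_apply, ← Equiv.Perm.mul_apply, ← zpow_add, ← zpow_neg_one,
            ← zpow_add]
          congr 2
          ring
        _ = x := by simp [hix]
    have := hx _ hperiod
    grind
  · obtain ⟨i, hi⟩ := hrep x
    have hodd : ¬ Even i := fun h => hxA ⟨i, h, hi⟩
    refine ⟨i + 1, by grind, ?_⟩
    rw [hrep_apply, add_comm, zpow_add, zpow_one, Equiv.Perm.mul_apply, hi]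

/-- A symmetric set `B` such that `B` and `2B` partition the nonzero elements of `R`. For `R = ℤ_n`
with `n` odd, the words `{-2a, 0, 2a}` with `a ∈ B` then form an optimal code in `ℤ_{2n}`. -/
structure IsDoublingSplit {R : Type*} [Ring R] (B : Set R) : Prop where
  zero_notMem : 0 ∉ B
  neg_mem : ∀ a ∈ B, -a ∈ B
  two_mul_mem_iff : ∀ a ≠ 0, (2 * a ∈ B ↔ a ∉ B)

theorem even_of_zpow_smul_eq_self {R : Type*} [Ring R] {u : Rˣ} {k : ℕ} (hk : u ^ k = -1) {a : R}
    (ha : 2 * a ≠ 0) {i : ℤ} (hi : u ^ i • a = a) : Even i := by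
  by_contra hodd
  have hpow : (u ^ i) ^ k = -1 := by
    rw [← zpow_natCast, zpow_comm, zpow_natCast, hk, (Int.not_even_iff_odd.1 hodd).neg_one_zpow]
  have hfix : (u ^ i) ^ k • a = a := pow_mem (S := MulAction.stabilizer Rˣ a) hi k
  rw [hpow, Units.neg_smul, one_smul, neg_eq_iff_add_eq_zero, ← two_mul] at hfix
  exact ha hfix

theorem exists_isDoublingSplit {R : Type*} [Ring R] {u : Rˣ} (hu : (u : R) = 2) {s : ℕ}
    (hs : u ^ (2 * s) = -1) : ∃ B : Set R, IsDoublingSplit B := by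
  have hdouble {a : R} (ha : a ≠ 0) : 2 * a ≠ 0 := by rwa [← hu, Ne, Units.mul_right_eq_zero]
  let σ : Equiv.Perm R := MulAction.toPermHom Rˣ R u
  have hσ (i : ℤ) (a : R) : (σ ^ i) a = u ^ i • a := by
    rw [← map_zpow, MulAction.toPermHom_apply, MulAction.toPerm_apply]
  have heven (a : R) (ha : a ≠ 0) (i : ℤ) (hi : (σ ^ i) a = a) : Even i :=
    even_of_zpow_smul_eq_self hs (hdouble ha) (hσ i a ▸ hi)
  obtain ⟨A, hA⟩ := exists_set_apply_mem_iff_notMem σ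
  have hflip (a : R) (ha : a ≠ 0) : 2 * a ∈ A ↔ a ∉ A := by
    simpa [σ, Units.smul_def, hu] using hA a (heven a ha)
  have hpow (k : ℕ) (a : R) (ha : a ≠ 0) : 2 ^ (2 * k) * a ∈ A ↔ a ∈ A := by
    induction k generalizing a with
    | zero => simp
    | succ k ih =>
      rw [mul_add_one, pow_add, pow_two, mul_assoc, mul_assoc, ih _ (hdouble (hdouble ha)),
        hflip _ (hdouble ha), hflip a ha, not_not]
  have hneg (a : R) (ha : a ≠ 0) (haA : a ∈ A) : -a ∈ A := by
    have h2s : (2 : R) ^ (2 * s) = -1 := by simpa [hu] using congrArg Units.val hs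
    rwa [← hpow s a ha, h2s, neg_one_mul] at haA
  exact ⟨A \ {0}, by simp, fun a ha => ⟨hneg a ha.2 ha.1, neg_ne_zero.2 ha.2⟩,
    fun a ha => by simp [hflip a ha, ha, hdouble ha]⟩

variable {n : ℕ}

theorem exists_isDoublingSplit_zmod (hn : Odd n) {s : ℕ} (hs : n ∣ 4 ^ s + 1) :
    ∃ B : Set (ZMod n), IsDoublingSplit B := by
  refine exists_isDoublingSplit (u := ZMod.unitOfCoprime 2 (Nat.coprime_two_left.2 hn)) (s := s)
    (by simp) (Units.ext ?_)
  have h : ((4 ^ s + 1 : ℕ) : ZMod n) = 0 := (ZMod.natCast_eq_zero_iff _ _).2 hs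
  push_cast at h
  rw [Units.val_pow_eq_pow_val, ZMod.coe_unitOfCoprime, Units.val_neg, Units.val_one, pow_mul,
    eq_neg_iff_add_eq_zero, ← h]
  norm_num

theorem two_mul_bijective_zmod (hn : Odd n) : Function.Bijective ((2 : ZMod n) * ·) :=
  (ZMod.unitOfCoprime 2 (Nat.coprime_two_left.2 hn)).mulLeft.bijective

theorem IsDoublingSplit.two_mul_card_add_one [NeZero n] (hn : Odd n) {B : Finset (ZMod n)}
    (hB : IsDoublingSplit (B : Set (ZMod n))) : 2 * B.card + 1 = n := by
  have hbij := two_mul_bijective_zmod hn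
  have himage : B.image (2 * ·) = (insert 0 B)ᶜ := by
    ext c
    obtain ⟨d, rfl⟩ := hbij.surjective c
    have hd0 : 2 * d = 0 ↔ d = 0 := by simpa using hbij.injective.eq_iff (a := d) (b := 0)
    have hmem : 2 * d ∈ B.image (2 * ·) ↔ d ∈ B := hbij.injective.mem_finset_image
    rw [hmem, mem_compl, mem_insert, hd0]
    rcases eq_or_ne d 0 with rfl | hd
    · simpa using hB.zero_notMem
    · have hflip : 2 * d ∈ B ↔ d ∉ B := hB.two_mul_mem_iff d hd
      rw [hflip, or_iff_right hd, not_not]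
  have hcard := congrArg card himage
  rw [card_image_of_injective B hbij.injective, card_compl, ZMod.card,
    card_insert_of_notMem hB.zero_notMem] at hcard
  have := NeZero.pos n
  omega

end DoublingSplit

/-! ### The code -/

section Code

/-- The embedding `a ↦ 2a` of `ℤ_n` onto the even residues in `ℤ_{2n}`. -/
def evenEmbedding (n : ℕ) : ZMod n →+ ZMod (2 * n) :=
  ZMod.lift n ⟨(AddMonoidHom.mulLeft 2).comp (Int.castAddHom (ZMod (2 * n))), by
    change (2 : ZMod (2 * n)) * ((n : ℤ) : ZMod (2 * n)) = 0
    exact_mod_cast ZMod.natCast_self (2 * n)⟩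

/-- The codeword `{-2a, 0, 2a}` of `ℤ_{2n}`, indexed by `a ∈ ℤ_n`. -/
def symmCodeword {n : ℕ} (a : ZMod n) : Finset (ZMod (2 * n)) :=
  {-evenEmbedding n a, 0, evenEmbedding n a}

variable {n : ℕ}

theorem evenEmbedding_intCast (k : ℤ) : evenEmbedding n (k : ZMod n) = 2 * (k : ZMod (2 * n)) :=
  ZMod.lift_coe n _ k

theorem evenEmbedding_injective : Function.Injective (evenEmbedding n) := by
  refine (injective_iff_map_eq_zero _).2 fun a ha => ?_
  obtain ⟨k, rfl⟩ := ZMod.intCast_surjective a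
  rw [evenEmbedding_intCast] at ha
  have hdvd : ((2 * n : ℕ) : ℤ) ∣ 2 * k :=
    (ZMod.intCast_zmod_eq_zero_iff_dvd _ _).1 (by simpa using ha)
  rw [ZMod.intCast_zmod_eq_zero_iff_dvd]
  exact Int.dvd_of_mul_dvd_mul_left two_ne_zero (by simpa using hdvd)

theorem even_evenEmbedding (a : ZMod n) : Even (evenEmbedding n a) := by
  obtain ⟨k, rfl⟩ := ZMod.intCast_surjective a
  exact evenEmbedding_intCast (n := n) k ▸ even_two_mul _

theorem not_even_one_zmod_two_mul : ¬ Even (1 : ZMod (2 * n)) := fun h => by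
  have := h.map (ZMod.castHom (dvd_mul_right 2 n) (ZMod 2))
  rw [map_one, even_iff_two_dvd] at this
  revert this
  decide

theorem symmCodeword_neg (a : ZMod n) : symmCodeword (-a) = symmCodeword a := by
  ext x
  simp only [symmCodeword, map_neg, neg_neg, mem_insert, mem_singleton]
  tauto

theorem symmCodeword_eq_iff {a b : ZMod n} (ha : a ≠ 0) :
    symmCodeword a = symmCodeword b ↔ a = b ∨ a = -b := by
  refine ⟨fun h => ?_, ?_⟩
  · have hmem : evenEmbedding n a ∈ symmCodeword b := h ▸ by simp [symmCodeword]
    simp only [symmCodeword, mem_insert, mem_singleton, ← map_neg,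
      map_eq_zero_iff _ evenEmbedding_injective, evenEmbedding_injective.eq_iff] at hmem
    tauto
  · rintro (rfl | rfl)
    exacts [rfl, symmCodeword_neg b]

theorem card_symmCodeword (hn : Odd n) {a : ZMod n} (ha : a ≠ 0) : (symmCodeword a).card = 3 := by
  have h0 : evenEmbedding n a ≠ 0 := (map_ne_zero_iff _ evenEmbedding_injective).2 ha
  have hneg : -evenEmbedding n a ≠ evenEmbedding n a := by
    rw [← map_neg]
    exact evenEmbedding_injective.ne (ZMod.ne_neg_self hn ha).symm
  exact card_eq_three.2 ⟨_, _, _, neg_ne_zero.2 h0, hneg, h0.symm, rfl⟩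

theorem exists_of_mem_dstar_symmCodeword {a : ZMod n} {x : ZMod (2 * n)}
    (hx : x ∈ dstar (symmCodeword a)) :
    ∃ c, (c = a ∨ c = -a) ∧ (x = evenEmbedding n c ∨ x = evenEmbedding n (2 * c)) := by
  obtain ⟨⟨y, hy, z, hz, rfl⟩, hne⟩ := mem_dstar.1 hx
  simp only [symmCodeword, mem_insert, mem_singleton] at hy hz
  rcases hy with rfl | rfl | rfl <;> rcases hz with rfl | rfl | rfl
  · exact absurd (sub_self _) hne
  · exact ⟨-a, Or.inr rfl, Or.inl (by simp)⟩
  · exact ⟨-a, Or.inr rfl, Or.inr (by simp [two_mul, sub_eq_add_neg])⟩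
  · exact ⟨a, Or.inl rfl, Or.inl (by simp)⟩
  · exact absurd (sub_self _) hne
  · exact ⟨-a, Or.inr rfl, Or.inl (by simp)⟩
  · exact ⟨a, Or.inl rfl, Or.inr (by simp [two_mul])⟩
  · exact ⟨a, Or.inl rfl, Or.inl (by simp)⟩
  · exact absurd (sub_self _) hne

theorem even_of_mem_dstar_symmCodeword {a : ZMod n} {x : ZMod (2 * n)}
    (hx : x ∈ dstar (symmCodeword a)) : Even x := by
  obtain ⟨c, -, rfl | rfl⟩ := exists_of_mem_dstar_symmCodeword hx <;> exact even_evenEmbedding _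

namespace IsDoublingSplit

variable {B : Finset (ZMod n)}

theorem ne_zero_of_mem (hB : IsDoublingSplit (B : Set (ZMod n))) {a : ZMod n} (ha : a ∈ B) :
    a ≠ 0 :=
  ne_of_mem_of_not_mem ha hB.zero_notMem

theorem two_mul_notMem (hB : IsDoublingSplit (B : Set (ZMod n))) {a : ZMod n} (ha : a ∈ B) :
    2 * a ∉ B :=
  fun h => (hB.two_mul_mem_iff a (hB.ne_zero_of_mem ha)).1 h ha

theorem symmCodeword_eq_of_mem_dstar (hn : Odd n) (hB : IsDoublingSplit (B : Set (ZMod n)))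
    {a b : ZMod n} (ha : a ∈ B) (hb : b ∈ B) {x : ZMod (2 * n)}
    (hxa : x ∈ dstar (symmCodeword a)) (hxb : x ∈ dstar (symmCodeword b)) :
    symmCodeword a = symmCodeword b := by
  obtain ⟨c, hca, hxc⟩ := exists_of_mem_dstar_symmCodeword hxa
  obtain ⟨d, hdb, hxd⟩ := exists_of_mem_dstar_symmCodeword hxb
  have hc : c ∈ B := by rcases hca with rfl | rfl; exacts [ha, hB.neg_mem a ha]
  have hd : d ∈ B := by rcases hdb with rfl | rfl; exacts [hb, hB.neg_mem b hb]
  have hcd : c = d := by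
    rcases hxc with rfl | rfl <;> rcases hxd with h | h <;> have h := evenEmbedding_injective h
    · exact h
    · exact absurd (h ▸ hc) (hB.two_mul_notMem hd)
    · exact absurd (h ▸ hd) (hB.two_mul_notMem hc)
    · exact (two_mul_bijective_zmod hn).injective h
  have hcwa : symmCodeword c = symmCodeword a := by
    rcases hca with rfl | rfl; exacts [rfl, symmCodeword_neg a]
  have hcwb : symmCodeword d = symmCodeword b := by
    rcases hdb with rfl | rfl; exacts [rfl, symmCodeword_neg b]
  rw [← hcwa, ← hcwb, hcd]

theorem isSCAC_image_symmCodeword (hn : Odd n) (hB : IsDoublingSplit (B : Set (ZMod n))) :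
    IsSCAC (2 * n) 3 (B.image symmCodeword) := by
  simp only [IsSCAC, forall_mem_image]
  refine ⟨fun a ha => card_symmCodeword hn (hB.ne_zero_of_mem ha),
    fun a _ => ⟨fun h => ?_, fun h => ?_⟩, fun a ha b hb hab => disjoint_left.2 fun x hxa hxb => ?_⟩
  · exact not_even_one_zmod_two_mul (even_of_mem_dstar_symmCodeword h)
  · exact not_even_one_zmod_two_mul (even_neg.1 (even_of_mem_dstar_symmCodeword h))
  · have hparity {y : ZMod (2 * n)} (hy : Even y) (hy' : Even (y - 1)) : False :=
      not_even_one_zmod_two_mul (by simpa using hy.sub hy')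
    rcases mem_dplus.1 hxa with ha' | ha' <;> rcases mem_dplus.1 hxb with hb' | hb'
    · exact hab (hB.symmCodeword_eq_of_mem_dstar hn ha hb ha' hb')
    · exact hparity (even_of_mem_dstar_symmCodeword ha') (even_of_mem_dstar_symmCodeword hb')
    · exact hparity (even_of_mem_dstar_symmCodeword hb') (even_of_mem_dstar_symmCodeword ha')
    · exact hab (hB.symmCodeword_eq_of_mem_dstar hn ha hb ha' hb')

theorem card_eq_two_mul_card_image_symmCodeword (hn : Odd n)
    (hB : IsDoublingSplit (B : Set (ZMod n))) : B.card = 2 * (B.image symmCodeword).card := by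
  rw [card_eq_sum_card_image symmCodeword]
  refine (sum_const_nat (forall_mem_image.2 fun a ha => ?_)).trans (mul_comm _ 2)
  have hfiber : {b ∈ B | symmCodeword b = symmCodeword a} = {a, -a} := by
    ext b
    simp only [mem_filter, mem_insert, mem_singleton]
    refine ⟨fun ⟨hb, h⟩ => (symmCodeword_eq_iff (hB.ne_zero_of_mem hb)).1 h, ?_⟩
    rintro (rfl | rfl)
    exacts [⟨ha, rfl⟩, ⟨hB.neg_mem a ha, symmCodeword_neg a⟩]
  rw [hfiber, card_pair (ZMod.ne_neg_self hn (hB.ne_zero_of_mem ha))]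

end IsDoublingSplit

end Code

/-! ### The special lengths -/

theorem sq_add_succ_sq_mul (x : ℕ) :
    (x ^ 2 + (x + 1) ^ 2) * ((x + 1) ^ 2 + (x + 2) ^ 2) = 4 * (x + 1) ^ 4 + 1 := by
  ring

theorem exists_odd_dvd_four_pow_add_one {L : ℕ}
    (hL : (∃ t : ℕ, 1 ≤ t ∧ L = 2 ^ (2 * t + 1) + 2) ∨
          (∃ t : ℕ, 2 ≤ t ∧ L = 2 ^ (2 * t) - 2 ^ (t + 1) + 2) ∨
          (∃ t : ℕ, 1 ≤ t ∧ L = 2 ^ (2 * t) + 2 ^ (t + 1) + 2)) :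
    ∃ n s : ℕ, Odd n ∧ n ∣ 4 ^ s + 1 ∧ L = 2 * n := by
  have hodd (x : ℕ) : Odd (x ^ 2 + (x + 1) ^ 2) := ⟨x ^ 2 + x, by ring⟩
  have hfour (u : ℕ) : 4 ^ (2 * u + 1) = 4 * (2 ^ u) ^ 4 := by
    rw [pow_right_comm 2 u 4, pow_succ', pow_mul]
    norm_num
  rcases hL with ⟨t, ht, rfl⟩ | ⟨t, ht, rfl⟩ | ⟨t, ht, rfl⟩
  · have heven : Even (4 ^ t) := (by decide : Even 4).pow_of_ne_zero (by omega)
    exact ⟨4 ^ t + 1, t, heven.add_one, dvd_rfl, by rw [pow_succ, pow_mul]; ring⟩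
  all_goals
    obtain ⟨u, rfl⟩ : ∃ u, t = u + 1 := Nat.exists_eq_add_of_le' (by omega)
    obtain ⟨x, hx⟩ : ∃ x, 2 ^ u = x + 1 := Nat.exists_eq_add_of_le' Nat.one_le_two_pow
    have hsq : 2 ^ (2 * (u + 1)) = 4 * (x + 1) ^ 2 := by rw [← hx]; ring
    have hlin : 2 ^ (u + 1 + 1) = 4 * (x + 1) := by rw [← hx]; ring
  · refine ⟨x ^ 2 + (x + 1) ^ 2, 2 * u + 1, hodd x, ?_, ?_⟩
    · rw [hfour, hx, ← sq_add_succ_sq_mul]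
      exact dvd_mul_right _ _
    · rw [hsq, hlin, show 4 * (x + 1) ^ 2 = 4 * (x ^ 2 + x) + 4 * (x + 1) by ring,
        Nat.add_sub_cancel]
      ring
  · refine ⟨(x + 1) ^ 2 + (x + 2) ^ 2, 2 * u + 1, hodd (x + 1), ?_, ?_⟩
    · rw [hfour, hx, ← sq_add_succ_sq_mul]
      exact dvd_mul_left _ _
    · rw [hsq, hlin]
      ring

theorem MS_eq_special_lengths_general {n s : ℕ} (hn : Odd n) (hs : n ∣ 4 ^ s + 1) :
    MS (2 * n) 3 = (2 * n - 2) / 8 := by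
  classical
  have : NeZero n := ⟨hn.pos.ne'⟩
  obtain ⟨A, hA⟩ := exists_isDoublingSplit_zmod hn hs
  obtain ⟨B, rfl⟩ := A.toFinite.exists_finset_coe
  have hC := hA.isSCAC_image_symmCodeword hn
  have hcard : 8 * (B.image symmCodeword).card + 2 = 2 * n := by
    have := hA.two_mul_card_add_one hn
    have := hA.card_eq_two_mul_card_image_symmCodeword hn
    omega
  refine IsGreatest.csSup_eq ⟨⟨_, hC, by omega⟩, ?_⟩
  rintro _ ⟨C, hC, rfl⟩
  have := hC.eight_mul_card_le (by grind)
  omega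

theorem MS_eq_special_lengths (L : ℕ) (hL : 18 ≤ L)
    (hform : (∃ t : ℕ, 1 ≤ t ∧ L = 2 ^ (2 * t + 1) + 2) ∨
             (∃ t : ℕ, 2 ≤ t ∧ L = 2 ^ (2 * t) - 2 ^ (t + 1) + 2) ∨
             (∃ t : ℕ, 1 ≤ t ∧ L = 2 ^ (2 * t) + 2 ^ (t + 1) + 2)) :
    MS L 3 = (L - 2) / 8 := by
  obtain ⟨n, s, hn, hs, rfl⟩ := exists_odd_dvd_four_pow_add_one hform
  exact MS_eq_special_lengths_general hn hs
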